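/- arXiv:1707.00052 — 2 statements merged into one kernel-verified Lean document; each statement's English description precedes it below -/
import Mathlib

section
/- For all integers q ≥ 2, ℓ ≥ 1, t ≥ 1, n ≥ ℓ and every x ∈ Z_q^n with ℓ-step derivative φ_ℓ(x) = (u, v), the size of the tandem duplication sphere satisfies |S_{τ,ℓ,t}(x)| = Σ_{j=0}^{t} C(wt_H(v)+j, j) = C(t + wt_H(v) + 1, t), where wt_H(v) is the Hamming weight of v and C(·,·) denotes the binomial coefficient. -/
/-!
A word of length `≥ ℓ` with `m` positions violating period `ℓ` has exactly `C(m + k, k)` descendants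
after `k` tandem duplications, by induction on the word. Strip off its first symbol `c`.

* If `c` recurs at distance `ℓ`, every duplication can be carried out behind `c`, so the descendants
  of `c x` are those of `x` with `c` in front, and `m` does not change.
* Otherwise a descendant after `k + 1` steps is either `p y`, where `p` is the prefix of length `ℓ`
  and `y` a descendant of `c x` after `k` steps, or `c y` with `y` a descendant of `x` after `k + 1`
  steps. Duplications never alter the first `ℓ` symbols, so the symbol at distance `ℓ` from the
  start tells the two cases apart, and Pascal's rule gives the count.

Every duplication adds `ℓ ≥ 1` symbols, so the counts for `k ≤ t` add up to the size of the sphere,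
which the hockey-stick identity evaluates.
-/

namespace DupPaper

variable {α : Type*}

/-- `y` is obtained from `x` by one tandem duplication of length `ℓ`. -/
def TDup (ℓ : ℕ) (x y : List α) : Prop :=
  ∃ u v w : List α, v.length = ℓ ∧ x = u ++ v ++ w ∧ y = u ++ v ++ v ++ w

/-- `y` is obtained from `x` by one tandem deletion of length `ℓ`. -/
def TDel (ℓ : ℕ) (x y : List α) : Prop :=
  ∃ u v w : List α, v.length = ℓ ∧ x = u ++ v ++ v ++ w ∧ y = u ++ v ++ w

/-- `y` is obtained from `x` by one palindromic duplication of length `ℓ`. -/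
def PDup (ℓ : ℕ) (x y : List α) : Prop :=
  ∃ u v w : List α, v.length = ℓ ∧ x = u ++ v ++ w ∧ y = u ++ v ++ v.reverse ++ w

/-- `y` is obtained from `x` by one palindromic deletion of length `ℓ`. -/
def PDel (ℓ : ℕ) (x y : List α) : Prop :=
  ∃ u v w : List α, v.length = ℓ ∧ x = u ++ v ++ v.reverse ++ w ∧ y = u ++ v ++ w

/-- `y` is reached from `x` by exactly `k` steps of the relation `rel`. -/
def reachK (rel : List α → List α → Prop) : ℕ → List α → List α → Prop
  | 0, x, y => x = y
  | k + 1, x, y => ∃ z, rel x z ∧ reachK rel k z y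

/-- The sphere of all words reachable from `x` by at most `t` operations of type `rel`
(in particular it contains `x` itself). -/
def sphere (rel : List α → List α → Prop) (t : ℕ) (x : List α) : Set (List α) :=
  {y | ∃ k ≤ t, reachK rel k x y}

/-- A code `C` is `t`-error correcting for the error type `rel` if distinct codewords have
disjoint spheres. -/
def Correcting (rel : List α → List α → Prop) (t : ℕ) (C : Set (List α)) : Prop :=
  ∀ c₁ ∈ C, ∀ c₂ ∈ C, (sphere rel t c₁ ∩ sphere rel t c₂).Nonempty → c₁ = c₂

/-- The list of maximal runs (maximal blocks of identical consecutive symbols) of a word. -/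
def runs [DecidableEq α] : List α → List (List α)
  | [] => []
  | a :: rest =>
    match runs rest with
    | [] => [[a]]
    | r :: rs => if r.head? = some a then (a :: r) :: rs else [a] :: r :: rs

/-- `r(x)`: the number of runs of `x`. -/
def numRuns [DecidableEq α] (x : List α) : ℕ := (runs x).length

/-- `r_i(x)`: the number of runs of `x` of length exactly `i`. -/
def numRunsEq [DecidableEq α] (x : List α) (i : ℕ) : ℕ :=
  ((runs x).filter (fun r => r.length = i)).length

/-- `r_{≥ i}(x)`: the number of runs of `x` of length at least `i`. -/
def numRunsGe [DecidableEq α] (x : List α) (i : ℕ) : ℕ :=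
  ((runs x).filter (fun r => i ≤ r.length)).length

/-- `r_{I,2}(x)`: the number of runs of length exactly `2` located in the interior of `x`,
i.e. runs that are neither the first nor the last run of `x`. -/
def numInteriorRuns2 [DecidableEq α] (x : List α) : ℕ :=
  ((((runs x).drop 1).dropLast).filter (fun r => r.length = 2)).length

/-- The second component `v` of the `ℓ`-step derivative `φ_ℓ(x) = (u, v)`:
`v = (x_{ℓ+1}, …, x_n) − (x_1, …, x_{n−ℓ})` componentwise in `Z_q`. -/
def derivV (q ℓ : ℕ) (x : List (ZMod q)) : List (ZMod q) :=
  List.zipWith (· - ·) (x.drop ℓ) x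

/-- Hamming weight: the number of nonzero entries. -/
def wtH {q : ℕ} (v : List (ZMod q)) : ℕ := (v.filter (fun a => a ≠ 0)).length

/-- The lengths `(m_0, m_1, …, m_p)` of the (possibly empty) maximal zero runs of `v`,
where `v = (0^{m_0}, w_1, 0^{m_1}, w_2, …, w_p, 0^{m_p})` with all `w_i ≠ 0`. -/
def zeroRunLengths {q : ℕ} : List (ZMod q) → List ℕ
  | [] => [0]
  | a :: rest =>
    let t := zeroRunLengths rest
    if a = 0 then
      match t with
      | [] => [1]
      | m :: ms => (m + 1) :: ms
    else 0 :: t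

/-- The `ℓ`-zero signature `σ_ℓ(v) = (⌊m_0/ℓ⌋, …, ⌊m_p/ℓ⌋)` of `v = derivV q ℓ x`. -/
def sig (q ℓ : ℕ) (x : List (ZMod q)) : List ℕ :=
  (zeroRunLengths (derivV q ℓ x)).map (· / ℓ)

/-- The trunk `μ_ℓ(v)`: every maximal zero run of length `m` is shortened to length
`m mod ℓ`. -/
def trunk (q ℓ : ℕ) (v : List (ZMod q)) : List (ZMod q) :=
  ((runs v).map (fun r =>
    if r.head? = some (0 : ZMod q) then List.replicate (r.length % ℓ) (0 : ZMod q) else r)).flatten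

/-- The root `ρ_ℓ(x) = (u, μ_ℓ(v))` where `φ_ℓ(x) = (u, v)` is the `ℓ`-step derivative. -/
def root (q ℓ : ℕ) (x : List (ZMod q)) : List (ZMod q) × List (ZMod q) :=
  (x.take ℓ, trunk q ℓ (derivV q ℓ x))

/-- `ℓ1`-distance of two lists of naturals. -/
def l1diff (a b : List ℕ) : ℕ := (List.zipWith (fun s t => max s t - min s t) a b).sum

/-- The tandem duplication distance `d_{τ,ℓ}`. -/
def tdDist (q ℓ : ℕ) (x₁ x₂ : List (ZMod q)) : ℕ∞ :=
  if root q ℓ x₁ = root q ℓ x₂ then (l1diff (sig q ℓ x₁) (sig q ℓ x₂) : ℕ∞) else ⊤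

/-- The palindromic duplication `π_{i,ℓ}(x) = (u v v^R w)` at position `i`,
where `x = (u v w)`, `|u| = i`, `|v| = ℓ`. -/
def pdupAt (i ℓ : ℕ) (x : List α) : List α :=
  x.take (i + ℓ) ++ ((x.drop i).take ℓ).reverse ++ x.drop (i + ℓ)

/-- The result `(u v w)` of the palindromic deletion `π^δ_{i,ℓ}` applied to
`x = (u v v^R w)` with `|u| = i`, `|v| = ℓ`. -/
def pdelAt (i ℓ : ℕ) (x : List α) : List α :=
  x.take (i + ℓ) ++ x.drop (i + 2 * ℓ)

/-- The palindromic deletion `π^δ_{i,ℓ}` is defined at position `i` of `x`, i.e. `x` has the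
form `(u v v^R w)` with `|u| = i` and `|v| = ℓ`. -/
def PDelDefinedAt (q ℓ i : ℕ) (x : List (ZMod q)) : Prop :=
  ∃ u v w : List (ZMod q), u.length = i ∧ v.length = ℓ ∧ x = u ++ v ++ v.reverse ++ w

/-- `A(n', ℓ', ω)`: the number of words in `Z_q^{n'}` whose maximal zero runs all have length
at most `ℓ'` and whose Hamming weight is `ω`. -/
noncomputable def Acount (q n' ℓ' ω : ℕ) : ℕ :=
  {x : Fin n' → ZMod q | wtH (List.ofFn x) = ω ∧
    ∀ r ∈ runs (List.ofFn x), r.head? = some (0 : ZMod q) → r.length ≤ ℓ'}.ncard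

/-- Integer binomial coefficient with the conventions `C(a,b) = 0` for `a ≥ 0 > b` or
`0 ≤ a < b`, `C(-1,-1) = 1`, and `C(a,-1) = 0` for `a ≥ 0`. -/
def ichoose (a b : ℤ) : ℕ :=
  if a = -1 ∧ b = -1 then 1
  else if 0 ≤ a ∧ 0 ≤ b then Nat.choose a.toNat b.toNat
  else 0

/-- `r^{(0)}(A^π_ℓ(x))`: the number of maximal blocks of consecutive all-zero columns of the
matrix `A^π_ℓ(x) ∈ Z_q^{ℓ × (n−2ℓ+1)}` whose entry in row `s` and column `c`
(`1 ≤ s ≤ ℓ`, `1 ≤ c ≤ n−2ℓ+1`) is `x_{2ℓ+c−s} − x_{c+s−1}`. -/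
def zeroColBlocks (q ℓ n : ℕ) (x : List (ZMod q)) : ℕ :=
  ((runs ((List.range (n - 2 * ℓ + 1)).map (fun c =>
      (List.range ℓ).all (fun s =>
        x.getD (2 * ℓ + c - s - 1) (0 : ZMod q) = x.getD (c + s) (0 : ZMod q))))).filter
    (fun r => r.head? = some true)).length

/-- The words reached from `x` by exactly `k` steps of `rel`; the sphere is the union of these sets
over `k ≤ t`. -/
def descendants (rel : List α → List α → Prop) (k : ℕ) (x : List α) : Set (List α) :=
  {y | reachK rel k x y}

/-- The number of positions at which `x` fails to have period `ℓ`, i.e. the Hamming weight of the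
`ℓ`-step derivative, over an alphabet that need not carry a subtraction. -/
def periodDefect [DecidableEq α] (ℓ : ℕ) (x : List α) : ℕ :=
  (List.zip (x.drop ℓ) x).countP fun ab => ab.1 ≠ ab.2

section Descendants

variable {rel : List α → List α → Prop} {k t : ℕ} {x y : List α}

theorem descendants_zero : descendants rel 0 x = {x} :=
  Set.ext fun _ => eq_comm

theorem mem_descendants_succ :
    y ∈ descendants rel (k + 1) x ↔ ∃ z, rel x z ∧ y ∈ descendants rel k z :=
  Iff.rfl

theorem eq_of_mem_descendants {β : Type*} {f : List α → β} (hf : ∀ x y, rel x y → f y = f x)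
    (hy : y ∈ descendants rel k x) : f y = f x := by
  induction k generalizing x with
  | zero => exact congrArg f (Eq.symm hy)
  | succ k ih =>
    obtain ⟨z, hxz, hzy⟩ := hy
    exact (ih hzy).trans (hf x z hxz)

theorem descendants_map_subset {f : List α → List α} (hf : ∀ x y, rel x y → rel (f x) (f y)) :
    f '' descendants rel k x ⊆ descendants rel k (f x) := by
  rintro _ ⟨y, hy, rfl⟩
  induction k generalizing x with
  | zero => exact congrArg f hy
  | succ k ih =>
    obtain ⟨z, hxz, hzy⟩ := hy
    exact ⟨f z, hf x z hxz, ih hzy⟩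

theorem descendants_map_of_invariant {f : List α → List α} {P : List α → Prop}
    (hP : ∀ x y, rel x y → P x → P y)
    (hf : ∀ x, P x → {z | rel (f x) z} = f '' {z | rel x z}) (hx : P x) :
    descendants rel k (f x) = f '' descendants rel k x := by
  induction k generalizing x with
  | zero => simp only [descendants_zero, Set.image_singleton]
  | succ k ih =>
    have rel_map_iff (z : List α) : rel (f x) z ↔ ∃ z', rel x z' ∧ f z' = z :=
      Set.ext_iff.1 (hf x hx) z
    ext y
    simp only [mem_descendants_succ, rel_map_iff, Set.mem_image]
    constructor
    · rintro ⟨_, ⟨z, hxz, rfl⟩, hzy⟩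
      rw [ih (hP x z hxz hx)] at hzy
      obtain ⟨y, hzy, rfl⟩ := hzy
      exact ⟨y, ⟨z, hxz, hzy⟩, rfl⟩
    · rintro ⟨y, ⟨z, hxz, hzy⟩, rfl⟩
      exact ⟨f z, ⟨z, hxz, rfl⟩, ih (hP x z hxz hx) ▸ Set.mem_image_of_mem f hzy⟩

theorem sphere_zero : sphere rel 0 x = {x} := by
  rw [← descendants_zero (rel := rel)]
  ext y
  simp [sphere, descendants]

theorem sphere_succ : sphere rel (t + 1) x = sphere rel t x ∪ descendants rel (t + 1) x := by
  ext y
  simp only [sphere, descendants, Set.mem_ofPred_eq, Set.mem_union, Nat.le_succ_iff, or_and_right,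
    exists_or, exists_eq_left]

end Descendants

section TandemDuplication

variable {ℓ k t : ℕ} {c : α} {x y : List α}

theorem tDup_iff_exists_take_append_drop :
    TDup ℓ x y ↔ ∃ i, i + ℓ ≤ x.length ∧ y = x.take (i + ℓ) ++ x.drop i := by
  constructor
  · rintro ⟨u, v, w, rfl, rfl, rfl⟩
    refine ⟨u.length, by simp, ?_⟩
    rw [← List.length_append, List.take_left, List.append_assoc u v w, List.drop_left,
      List.append_assoc (u ++ v)]
  · rintro ⟨i, hi, rfl⟩
    refine ⟨x.take i, (x.drop i).take ℓ, x.drop (i + ℓ), by simp; omega, ?_, ?_⟩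
    · rw [← List.take_add, List.take_append_drop]
    · rw [← List.take_add, List.append_assoc, ← List.drop_drop, List.take_append_drop]

theorem TDup.length_eq (h : TDup ℓ x y) : y.length = x.length + ℓ := by
  obtain ⟨u, v, w, rfl, rfl, rfl⟩ := h
  simp only [List.length_append]
  omega

theorem TDup.le_length (h : TDup ℓ x y) : ℓ ≤ x.length := by
  obtain ⟨u, v, w, rfl, rfl, rfl⟩ := h
  simp only [List.length_append]
  omega

theorem TDup.take_eq (h : TDup ℓ x y) : y.take ℓ = x.take ℓ := by
  obtain ⟨i, hi, rfl⟩ := tDup_iff_exists_take_append_drop.1 h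
  rw [List.take_append_of_le_length (by simp; omega), List.take_take, Nat.min_eq_left (by omega)]

theorem TDup.append_left (p : List α) (h : TDup ℓ x y) : TDup ℓ (p ++ x) (p ++ y) := by
  obtain ⟨u, v, w, hv, rfl, rfl⟩ := h
  exact ⟨p ++ u, v, w, hv, by simp, by simp⟩

theorem tDup_take_append_self (hx : ℓ ≤ x.length) : TDup ℓ x (x.take ℓ ++ x) :=
  tDup_iff_exists_take_append_drop.2 ⟨0, by omega, by simp⟩

theorem tDup_iff_of_length_eq (hx : x.length = ℓ) : TDup ℓ x y ↔ y = x ++ x := by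
  have htake : x.take ℓ = x := List.take_of_length_le hx.le
  refine ⟨fun h => ?_, fun h => ?_⟩
  · obtain ⟨i, hi, rfl⟩ := tDup_iff_exists_take_append_drop.1 h
    obtain rfl : i = 0 := by omega
    rw [Nat.zero_add, htake, List.drop_zero]
  · rw [h]
    simpa only [htake] using tDup_take_append_self hx.ge

theorem setOf_tDup_cons (hx : ℓ ≤ (c :: x).length) :
    {z | TDup ℓ (c :: x) z}
      = insert ((c :: x).take ℓ ++ c :: x) ((c :: ·) '' {z | TDup ℓ x z}) := by
  ext z
  constructor
  · intro h
    obtain ⟨i, hi, rfl⟩ := tDup_iff_exists_take_append_drop.1 h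
    cases i with
    | zero => left; simp
    | succ i =>
      rw [Nat.succ_add, List.length_cons] at hi
      exact .inr ⟨x.take (i + ℓ) ++ x.drop i,
        tDup_iff_exists_take_append_drop.2 ⟨i, by omega, rfl⟩, by simp [Nat.succ_add]⟩
  · rintro (rfl | ⟨z, hz, rfl⟩)
    · exact tDup_take_append_self hx
    · exact hz.append_left [c]

/-- In the square `p p`, a duplication starting inside the first `p` inserts a rotation of `p` and
yields `p p p`, just as duplicating the second `p` does. -/
theorem setOf_tDup_take_append (hx : ℓ ≤ x.length) :
    {z | TDup ℓ (x.take ℓ ++ x) z} = (x.take ℓ ++ ·) '' {z | TDup ℓ x z} := by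
  have hlen : (x.take ℓ).length = ℓ := List.length_take_of_le hx
  ext z
  constructor
  · intro h
    obtain ⟨i, hi, rfl⟩ := tDup_iff_exists_take_append_drop.1 h
    rcases le_total ℓ i with hℓi | hiℓ
    · obtain ⟨j, rfl⟩ := Nat.exists_eq_add_of_le hℓi
      refine ⟨x.take (j + ℓ) ++ x.drop j, tDup_iff_exists_take_append_drop.2
        ⟨j, by simp only [List.length_append, hlen] at hi; omega, rfl⟩, ?_⟩
      simp [List.take_append, List.drop_append, hlen, Nat.add_assoc, List.take_take]
    · refine ⟨x.take ℓ ++ x, tDup_take_append_self hx, ?_⟩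
      have htake : (x.take ℓ ++ x).take (i + ℓ) = x.take ℓ ++ (x.take ℓ).take i := by
        rw [List.take_append, hlen, Nat.add_sub_cancel, List.take_of_length_le (by omega),
          List.take_take, Nat.min_eq_left hiℓ]
      have hdrop : (x.take ℓ ++ x).drop i = (x.take ℓ).drop i ++ x :=
        List.drop_append_of_le_length (by omega)
      simp only [htake, hdrop, List.append_assoc]
      rw [← List.append_assoc ((x.take ℓ).take i), List.take_append_drop]
  · rintro ⟨z, hz, rfl⟩
    exact hz.append_left _

/-- When the first symbol `c` recurs at distance `ℓ`, duplicating the block that starts with this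
`c` gives the same word as duplicating the block right after it. -/
theorem setOf_tDup_cons_of_getElem?_eq (hc : (c :: x)[ℓ]? = some c) :
    {z | TDup ℓ (c :: x) z} = (c :: ·) '' {z | TDup ℓ x z} := by
  have hx : ℓ ≤ x.length := Nat.le_of_lt_succ (List.getElem?_eq_some_iff.1 hc).1
  have hshift : (c :: x).take ℓ ++ [c] = c :: x.take ℓ := by
    rw [← List.take_succ_cons, List.take_add_one, hc, Option.toList_some]
  have hdup : (c :: x).take ℓ ++ c :: x = c :: (x.take ℓ ++ x) := by
    rw [← List.cons_append, ← hshift, List.append_assoc, List.singleton_append]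
  rw [setOf_tDup_cons (by simp; omega), hdup]
  exact Set.insert_eq_of_mem ⟨_, tDup_take_append_self hx, rfl⟩

theorem length_eq_of_mem_descendants (hy : y ∈ descendants (TDup ℓ) k x) :
    y.length = x.length + k * ℓ := by
  induction k generalizing x with
  | zero => rw [← show x = y from hy, Nat.zero_mul, Nat.add_zero]
  | succ k ih =>
    obtain ⟨z, hxz, hzy⟩ := hy
    rw [ih hzy, hxz.length_eq]
    ring

theorem take_eq_of_mem_descendants (hy : y ∈ descendants (TDup ℓ) k x) :
    y.take ℓ = x.take ℓ :=
  eq_of_mem_descendants (fun _ _ => TDup.take_eq) hy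

theorem getElem?_cons_eq_of_take_eq (h : y.take ℓ = x.take ℓ) :
    (c :: y)[ℓ]? = (c :: x)[ℓ]? := by
  rw [← List.getElem?_take_of_succ, List.take_succ_cons, h, ← List.take_succ_cons,
    List.getElem?_take_of_succ]

theorem descendants_take_append (hx : ℓ ≤ x.length) :
    descendants (TDup ℓ) k (x.take ℓ ++ x) = (x.take ℓ ++ ·) '' descendants (TDup ℓ) k x := by
  refine descendants_map_of_invariant (P := fun z => ℓ ≤ z.length ∧ z.take ℓ = x.take ℓ)
    (fun z w hzw hz => ⟨?_, hzw.take_eq.trans hz.2⟩) (fun z hz => ?_) ⟨hx, rfl⟩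
  · exact hzw.length_eq ▸ Nat.le_add_left ..
  · rw [← hz.2]
    exact setOf_tDup_take_append hz.1

theorem descendants_cons_of_getElem?_eq (hc : (c :: x)[ℓ]? = some c) :
    descendants (TDup ℓ) k (c :: x) = (c :: ·) '' descendants (TDup ℓ) k x := by
  exact descendants_map_of_invariant (P := fun z => (c :: z)[ℓ]? = some c)
    (fun z w hzw hz => (getElem?_cons_eq_of_take_eq hzw.take_eq).trans hz)
    (fun _ hz => setOf_tDup_cons_of_getElem?_eq hz) hc

theorem descendants_succ_cons (hx : ℓ ≤ (c :: x).length) :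
    descendants (TDup ℓ) (k + 1) (c :: x)
      = ((c :: x).take ℓ ++ ·) '' descendants (TDup ℓ) k (c :: x)
        ∪ (c :: ·) '' descendants (TDup ℓ) (k + 1) x := by
  refine Set.Subset.antisymm (fun y hy => ?_) (Set.union_subset ?_ ?_)
  · induction k generalizing x with
    | zero =>
      obtain ⟨z, hxz, rfl⟩ := hy
      exact ((setOf_tDup_cons hx).le hxz).imp (fun h => ⟨c :: x, rfl, h.symm⟩)
        fun ⟨z', hz', h⟩ => ⟨z', ⟨z', hz', rfl⟩, h⟩
    | succ k ih =>
      obtain ⟨z, hxz, hzy⟩ := hy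
      rcases (setOf_tDup_cons hx).le hxz with rfl | ⟨z, hz, rfl⟩
      · exact .inl (descendants_take_append hx ▸ hzy)
      · refine (ih (hx.trans (hxz.length_eq ▸ Nat.le_add_right ..)) hzy).imp ?_ ?_
        · rintro ⟨y, hy, rfl⟩
          exact ⟨y, ⟨c :: z, hxz, hy⟩, by simp only [hxz.take_eq]⟩
        · rintro ⟨y, hy, rfl⟩
          exact ⟨y, ⟨z, hz, hy⟩, rfl⟩
  · rw [← descendants_take_append hx]
    exact fun y hy => ⟨_, tDup_take_append_self hx, hy⟩
  · exact descendants_map_subset fun _ _ h => h.append_left [c]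

/-- The entry in position `ℓ` (counting from `0`) is `c` on the left and that of `c :: x` on the
right, since duplications preserve the first `ℓ` symbols. -/
theorem disjoint_image_descendants_of_getElem?_ne (hx : ℓ ≤ (c :: x).length)
    (hc : (c :: x)[ℓ]? ≠ some c) {m : ℕ} :
    Disjoint (((c :: x).take ℓ ++ ·) '' descendants (TDup ℓ) k (c :: x))
      ((c :: ·) '' descendants (TDup ℓ) m x) := by
  rw [Set.disjoint_left]
  rintro _ ⟨y, hy, rfl⟩ ⟨y', hy', h⟩
  have hℓ : 0 < ℓ := Nat.pos_of_ne_zero fun h0 => hc (by simp [h0])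
  refine hc ?_
  calc (c :: x)[ℓ]? = (c :: y')[ℓ]? :=
        (getElem?_cons_eq_of_take_eq (take_eq_of_mem_descendants hy')).symm
    _ = ((c :: x).take ℓ ++ y)[ℓ]? := congrArg (·[ℓ]?) h
    _ = y[0]? := by
      rw [List.getElem?_append_right (List.length_take_le ..), List.length_take_of_le hx,
        Nat.sub_self]
    _ = (c :: x)[0]? := by
      rw [← List.getElem?_take_of_lt hℓ, take_eq_of_mem_descendants hy,
        List.getElem?_take_of_lt hℓ]
    _ = some c := List.getElem?_cons_zero

theorem disjoint_sphere_descendants (hℓ : 0 < ℓ) :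
    Disjoint (sphere (TDup ℓ) t x) (descendants (TDup ℓ) (t + 1) x) := by
  rw [Set.disjoint_left]
  rintro y ⟨k, hk, hy⟩ hy'
  have hlen : k * ℓ = (t + 1) * ℓ := Nat.add_left_cancel
    ((length_eq_of_mem_descendants hy).symm.trans (length_eq_of_mem_descendants hy'))
  exact absurd (Nat.eq_of_mul_eq_mul_right hℓ hlen) (by omega)

end TandemDuplication

section Counting

variable {ℓ : ℕ} {x : List α}

theorem encard_descendants_of_length_eq (hx : x.length = ℓ) (k : ℕ) :
    (descendants (TDup ℓ) k x).encard = 1 := by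
  induction k with
  | zero => rw [descendants_zero, Set.encard_singleton]
  | succ k ih =>
    have hsucc : descendants (TDup ℓ) (k + 1) x = (x ++ ·) '' descendants (TDup ℓ) k x := by
      have hrec := descendants_take_append (k := k) hx.ge
      rw [List.take_of_length_le hx.le] at hrec
      rw [← hrec]
      ext y
      simp only [mem_descendants_succ, tDup_iff_of_length_eq hx, exists_eq_left]
    rw [hsucc, (List.append_right_injective x).encard_image, ih]

variable [DecidableEq α]

theorem periodDefect_of_length_le (hx : x.length ≤ ℓ) : periodDefect ℓ x = 0 := by
  rw [periodDefect, List.drop_eq_nil_of_le hx, List.zip_nil_left, List.countP_nil]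

theorem periodDefect_cons {c : α} (hx : ℓ ≤ x.length) :
    periodDefect ℓ (c :: x) = periodDefect ℓ x + if (c :: x)[ℓ]? = some c then 0 else 1 := by
  have hlt : ℓ < (c :: x).length := Nat.lt_succ_of_le hx
  rw [periodDefect, List.drop_eq_getElem_cons hlt, List.drop_succ_cons, List.zip_cons_cons,
    List.countP_cons, List.getElem?_eq_getElem hlt, periodDefect]
  simp

theorem encard_descendants (hx : ℓ ≤ x.length) (k : ℕ) :
    (descendants (TDup ℓ) k x).encard = (periodDefect ℓ x + k).choose k := by
  induction x generalizing k with
  | nil =>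
    have hlen : ([] : List α).length = ℓ := (Nat.eq_zero_of_le_zero hx).symm
    simp [encard_descendants_of_length_eq hlen, periodDefect_of_length_le hlen.le]
  | cons c x ih =>
    rcases hx.eq_or_lt with hlen | hlt
    · simp [encard_descendants_of_length_eq hlen.symm, periodDefect_of_length_le hlen.ge]
    have hx' : ℓ ≤ x.length := Nat.le_of_lt_succ hlt
    rw [periodDefect_cons hx']
    split_ifs with hc
    · rw [descendants_cons_of_getElem?_eq hc, List.cons_injective.encard_image, ih hx',
        Nat.add_zero]
    induction k with
    | zero => simp [descendants_zero]
    | succ k ihk =>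
      rw [descendants_succ_cons hx,
        Set.encard_union_eq (disjoint_image_descendants_of_getElem?_ne hx hc),
        (List.append_right_injective _).encard_image, List.cons_injective.encard_image,
        ihk, ih hx']
      have pascal (m : ℕ) :
          (m + 1 + k).choose k + (m + (k + 1)).choose (k + 1)
            = (m + 1 + (k + 1)).choose (k + 1) := by
        rw [← Nat.add_assoc (m + 1), Nat.choose_succ_succ, Nat.add_right_comm m 1 k, Nat.add_assoc]
      exact_mod_cast pascal (periodDefect ℓ x)

theorem encard_sphere (hℓ : 0 < ℓ) (hx : ℓ ≤ x.length) (t : ℕ) :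
    (sphere (TDup ℓ) t x).encard
      = (∑ j ∈ Finset.range (t + 1), (periodDefect ℓ x + j).choose j : ℕ) := by
  induction t with
  | zero => simp [sphere_zero]
  | succ t ih =>
    rw [sphere_succ, Set.encard_union_eq (disjoint_sphere_descendants hℓ), ih,
      encard_descendants hx, Finset.sum_range_succ _ (t + 1), Nat.cast_add]

end Counting

theorem sum_range_choose_add (m t : ℕ) :
    ∑ j ∈ Finset.range (t + 1), (m + j).choose j = (t + m + 1).choose t := by
  calc ∑ j ∈ Finset.range (t + 1), (m + j).choose j
      = ∑ j ∈ Finset.range (t + 1), (j + m).choose m :=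
        Finset.sum_congr rfl fun j _ => by rw [← Nat.choose_symm_add, Nat.add_comm]
    _ = (t + (m + 1)).choose (m + 1) := Nat.sum_range_add_choose t m
    _ = (t + m + 1).choose t := Nat.choose_symm_add.symm

theorem wtH_derivV (q ℓ : ℕ) (x : List (ZMod q)) : wtH (derivV q ℓ x) = periodDefect ℓ x := by
  rw [wtH, derivV, periodDefect, ← List.countP_eq_length_filter, ← List.map_uncurry_zip_eq_zipWith,
    List.countP_map]
  simp only [Function.comp_def, Function.uncurry, ne_eq, sub_eq_zero]

theorem stmt5_general [DecidableEq α] (ℓ t : ℕ) (hℓ : 1 ≤ ℓ) (x : List α) (hx : ℓ ≤ x.length) :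
    (sphere (TDup ℓ) t x).ncard = ∑ j ∈ Finset.range (t + 1), (periodDefect ℓ x + j).choose j ∧
    (sphere (TDup ℓ) t x).ncard = (t + periodDefect ℓ x + 1).choose t := by
  have hcard : (sphere (TDup ℓ) t x).ncard = _ := congrArg ENat.toNat (encard_sphere hℓ hx t)
  exact ⟨hcard, hcard.trans (sum_range_choose_add _ _)⟩

/-- The size of the tandem duplication sphere:
`|S_{τ,ℓ,t}(x)| = Σ_{j=0}^t C(wt_H(v)+j, j) = C(t+wt_H(v)+1, t)` where `φ_ℓ(x) = (u,v)`. -/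
theorem stmt5 (q ℓ t n : ℕ) (hq : 2 ≤ q) (hℓ : 1 ≤ ℓ) (ht : 1 ≤ t) (hn : ℓ ≤ n)
    (x : List (ZMod q)) (hx : x.length = n) :
    (sphere (TDup ℓ) t x).ncard
        = ∑ j ∈ Finset.range (t + 1), Nat.choose (wtH (derivV q ℓ x) + j) j ∧
    (sphere (TDup ℓ) t x).ncard = Nat.choose (t + wtH (derivV q ℓ x) + 1) t := by
  rw [wtH_derivV]
  exact stmt5_general ℓ t hℓ x (hx ▸ hn)

end DupPaper
end

section
/- For all integers q ≥ 2, n ≥ 1 and every x ∈ Z_q^n, the size of the single palindromic duplication sphere for duplication length ℓ = 1 satisfies |S_{π,1}(x)| = r(x) + 1, where r(x) is the number of runs of x. -/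
/-!
Every word obtained from `x` by duplicating one symbol is longer than `x`, so the sphere is the
disjoint union of `{x}` and the set `D(x)` of these words, and it remains to see `|D(x)| = r(x)`.

The set satisfies `D(a t) = {a a t} ∪ a D(t)`. Words of `D(t)` start with the same symbol as `t`,
so `a a t` lies in `a D(t)` if and only if `t` starts with `a`. Hence `|D(a t)|` exceeds `|D(t)|`
by one exactly when `a` opens a new run of `a t`, and `|D|` and `r` obey the same recursion.
-/

namespace DupPaper

variable {α : Type*}

/-- The set of words obtained from `x` by exactly one palindromic duplication of length `ℓ`; for
`ℓ = 1` this is the set `D(x)` whose cardinality is the number of runs. -/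
def pdupSet (ℓ : ℕ) (x : List α) : Set (List α) := {y | PDup ℓ x y}

lemma sphere_one (rel : List α → List α → Prop) (x : List α) :
    sphere rel 1 x = insert x {y | rel x y} := by
  ext y
  simp [sphere, Nat.le_one_iff_eq_zero_or_eq_one, reachK, eq_comm]

namespace PDup

variable {ℓ : ℕ} {x y : List α}

lemma length_eq (h : PDup ℓ x y) : y.length = x.length + ℓ := by
  obtain ⟨u, v, w, rfl, rfl, rfl⟩ := h
  simp only [List.length_append, List.length_reverse]
  omega

lemma head?_eq (h : PDup ℓ x y) : y.head? = x.head? := by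
  obtain ⟨u, v, w, -, rfl, rfl⟩ := h
  cases u <;> cases v <;> simp

end PDup

lemma self_notMem_pdupSet {ℓ : ℕ} (hℓ : ℓ ≠ 0) (x : List α) : x ∉ pdupSet ℓ x :=
  fun h ↦ hℓ (Nat.left_eq_add.mp (PDup.length_eq h))

lemma pdup_one_iff {x y : List α} :
    PDup 1 x y ↔ ∃ u a w, x = u ++ a :: w ∧ y = u ++ a :: a :: w := by
  simp [PDup, List.length_eq_one_iff]

lemma pdupSet_one_nil : pdupSet 1 ([] : List α) = ∅ := by
  ext y
  simp [pdupSet, pdup_one_iff]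

lemma pdupSet_one_cons (a : α) (t : List α) :
    pdupSet 1 (a :: t) = insert (a :: a :: t) (List.cons a '' pdupSet 1 t) := by
  ext y
  simp only [pdupSet, Set.mem_insert_iff, Set.mem_image, Set.mem_ofPred_eq, pdup_one_iff]
  constructor
  · rintro ⟨_ | ⟨c, u⟩, b, w, hx, rfl⟩ <;> obtain ⟨rfl, rfl⟩ := List.cons_eq_cons.mp hx
    · exact Or.inl rfl
    · exact Or.inr ⟨_, ⟨u, b, w, rfl, rfl⟩, rfl⟩
  · rintro (rfl | ⟨_, ⟨u, b, w, rfl, rfl⟩, rfl⟩)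
    · exact ⟨[], a, t, rfl, rfl⟩
    · exact ⟨a :: u, b, w, rfl, rfl⟩

lemma cons_self_mem_pdupSet_one_iff {a : α} {t : List α} :
    a :: t ∈ pdupSet 1 t ↔ t.head? = some a := by
  constructor
  · exact fun h ↦ (PDup.head?_eq h).symm
  · intro h
    obtain ⟨s, rfl⟩ := List.head?_eq_some_iff.mp h
    exact pdup_one_iff.mpr ⟨[], a, s, rfl, rfl⟩

section Runs

variable [DecidableEq α]

lemma head?_runs_bind_head? (x : List α) : (runs x).head?.bind List.head? = x.head? := by
  cases x with
  | nil => rfl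
  | cons a t =>
    rw [runs]
    split
    · rfl
    · split_ifs <;> rfl

lemma numRuns_cons (a : α) (t : List α) :
    numRuns (a :: t) = if t.head? = some a then numRuns t else numRuns t + 1 := by
  rw [← head?_runs_bind_head? t, numRuns, numRuns, runs]
  cases runs t with
  | nil => rfl
  | cons r rs => exact apply_ite List.length _ _ _

theorem encard_pdupSet_one (x : List α) : (pdupSet 1 x).encard = numRuns x := by
  induction x with
  | nil => simp [pdupSet_one_nil, numRuns, runs]
  | cons a t ih =>
    have card_image : (List.cons a '' pdupSet 1 t).encard = numRuns t := by
      rw [List.cons_injective.encard_image, ih]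
    have mem_image_iff : a :: a :: t ∈ List.cons a '' pdupSet 1 t ↔ t.head? = some a := by
      rw [List.cons_injective.mem_set_image, cons_self_mem_pdupSet_one_iff]
    rw [pdupSet_one_cons, numRuns_cons]
    split_ifs with hrun
    · rw [Set.insert_eq_of_mem (mem_image_iff.mpr hrun), card_image]
    · rw [Set.encard_insert_of_notMem (mt mem_image_iff.mp hrun), card_image, Nat.cast_add_one]

theorem stmt7_general (x : List α) : (sphere (PDup 1) 1 x).encard = numRuns x + 1 := by
  rw [sphere_one, ← pdupSet, Set.encard_insert_of_notMem (self_notMem_pdupSet one_ne_zero x),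
    encard_pdupSet_one]

end Runs

/-- The size of the single palindromic duplication sphere for `ℓ = 1`:
`|S_{π,1}(x)| = r(x) + 1`. -/
theorem stmt7 (q n : ℕ) (hq : 2 ≤ q) (hn : 1 ≤ n) (x : List (ZMod q)) (hx : x.length = n) :
    (sphere (PDup 1) 1 x).ncard = numRuns x + 1 := by
  rw [Set.ncard, stmt7_general, ← Nat.cast_add_one, ENat.toNat_natCast]
end DupPaper
end
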